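/- arXiv:2103.11018 — 6 statements merged into one kernel-verified Lean document; each statement's English description precedes it below -/
import Mathlib

section
/- For every integer n ≥ 3, the number a(n) of permutations ρ of {0,1,…,n−1} satisfying ρ(0)=0, ρ(1)=2, ρ(i)≠i for all 1≤i≤n−1, and ρ(i)≤i+1 for all 1≤i≤n−1 equals F(n−2), the (n−2)nd Fibonacci number (with F(1)=F(2)=1). -/
/-- The set `A(n)` of permutations `ρ` of `{0,1,…,n−1}` with `ρ(0)=0`, `ρ(1)=2`,
and `ρ(i)≠i`, `ρ(i)≤i+1` for all `i` with `1 ≤ i ≤ n−1`. -/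
def molsA (n : ℕ) : Finset (Equiv.Perm (Fin n)) :=
  Finset.univ.filter fun ρ =>
    (∀ i : Fin n, (i : ℕ) = 0 → (ρ i : ℕ) = 0) ∧
    (∀ i : Fin n, (i : ℕ) = 1 → (ρ i : ℕ) = 2) ∧
    (∀ i : Fin n, 1 ≤ (i : ℕ) → (ρ i : ℕ) ≠ (i : ℕ) ∧ (ρ i : ℕ) ≤ (i : ℕ) + 1)

/-- `a(n)`, the number of such permutations. -/
def molsa (n : ℕ) : ℕ := (molsA n).card

/-- Fixed-point-free permutations of `Fin m` with `ρ i ≤ i + 1`. -/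
def molsD (m : ℕ) : Finset (Equiv.Perm (Fin m)) :=
  Finset.univ.filter fun ρ => ∀ i : Fin m, (ρ i : ℕ) ≠ (i : ℕ) ∧ (ρ i : ℕ) ≤ (i : ℕ) + 1

/-- The same, but `0` may be fixed. -/
def molsE (m : ℕ) : Finset (Equiv.Perm (Fin m)) :=
  Finset.univ.filter fun ρ =>
    ∀ i : Fin m, ((i : ℕ) ≠ 0 → (ρ i : ℕ) ≠ (i : ℕ)) ∧ (ρ i : ℕ) ≤ (i : ℕ) + 1

lemma mols_succ_zero {m : ℕ} (e : Equiv.Perm (Fin m)) (i : Fin m) :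
    ((Equiv.Perm.decomposeFin.symm (0, e) i.succ : Fin (m+1)) : ℕ) = e i + 1 := by
  simp [Equiv.Perm.decomposeFin_symm_apply_succ]

lemma mols_succ_one {m : ℕ} (e : Equiv.Perm (Fin (m+1))) (i : Fin (m+1)) :
    ((Equiv.Perm.decomposeFin.symm (1, e) i.succ : Fin (m+2)) : ℕ)
      = if (e i : ℕ) = 0 then 0 else (e i : ℕ) + 1 := by
  rw [Equiv.Perm.decomposeFin_symm_apply_succ]
  split_ifs with h
  · have h0 : e i = 0 := Fin.ext h
    rw [h0, show (Fin.succ 0 : Fin (m+2)) = 1 from rfl, Equiv.swap_apply_right]; rfl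
  · rw [Equiv.swap_apply_of_ne_of_ne]
    · simp
    · exact Fin.succ_ne_zero _
    · intro h'
      apply h
      have := congrArg Fin.val h'
      simpa using this

lemma mols_cases {m : ℕ} (p : Fin (m+2)) (h : (p : ℕ) ≤ 1) : p = 0 ∨ p = 1 := by
  rcases Nat.le_one_iff_eq_zero_or_eq_one.1 h with h | h
  · exact Or.inl (Fin.ext h)
  · exact Or.inr (Fin.ext (by simpa using h))

lemma mols_one_iff {m : ℕ} (e : Equiv.Perm (Fin (m+1))) :
    Equiv.Perm.decomposeFin.symm (1, e) ∈ molsD (m+2) ↔ e ∈ molsE (m+1) := by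
  simp only [molsD, molsE, Finset.mem_filter, Finset.mem_univ, true_and]
  rw [Fin.forall_fin_succ]
  simp only [mols_succ_one, Equiv.Perm.decomposeFin_symm_apply_zero, Fin.val_succ, Fin.val_zero,
    Fin.val_one]
  constructor
  · rintro ⟨-, h⟩ i
    have := h i
    split_ifs at this <;> omega
  · intro h
    refine ⟨by omega, fun i => ?_⟩
    have := h i
    split_ifs <;> omega

lemma mols_one_iff' {m : ℕ} (e : Equiv.Perm (Fin (m+1))) :
    Equiv.Perm.decomposeFin.symm (1, e) ∈ molsE (m+2) ↔ e ∈ molsE (m+1) := by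
  simp only [molsE, Finset.mem_filter, Finset.mem_univ, true_and]
  rw [Fin.forall_fin_succ]
  simp only [mols_succ_one, Equiv.Perm.decomposeFin_symm_apply_zero, Fin.val_succ, Fin.val_zero,
    Fin.val_one]
  constructor
  · rintro ⟨-, h⟩ i
    have := h i
    split_ifs at this <;> omega
  · intro h
    refine ⟨by omega, fun i => ?_⟩
    have := h i
    split_ifs <;> omega

lemma mols_zero_iff {m : ℕ} (e : Equiv.Perm (Fin (m+1))) :
    Equiv.Perm.decomposeFin.symm (0, e) ∈ molsE (m+2) ↔ e ∈ molsD (m+1) := by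
  simp only [molsD, molsE, Finset.mem_filter, Finset.mem_univ, true_and]
  rw [Fin.forall_fin_succ]
  simp only [mols_succ_zero, Equiv.Perm.decomposeFin_symm_apply_zero, Fin.val_succ, Fin.val_zero]
  constructor
  · rintro ⟨-, h⟩ i
    have := h i
    omega
  · intro h
    refine ⟨by omega, fun i => ?_⟩
    have := h i
    omega

lemma molsD_iff {m : ℕ} (p : Fin (m+2)) (e : Equiv.Perm (Fin (m+1))) :
    Equiv.Perm.decomposeFin.symm (p, e) ∈ molsD (m+2) ↔ p = 1 ∧ e ∈ molsE (m+1) := by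
  constructor
  · intro h
    have h0 := (Finset.mem_filter.1 h).2 0
    rw [Equiv.Perm.decomposeFin_symm_apply_zero] at h0
    rcases mols_cases p h0.2 with rfl | rfl
    · exact absurd rfl h0.1
    · exact ⟨rfl, (mols_one_iff e).1 h⟩
  · rintro ⟨rfl, h⟩
    exact (mols_one_iff e).2 h

lemma molsE_iff {m : ℕ} (p : Fin (m+2)) (e : Equiv.Perm (Fin (m+1))) :
    Equiv.Perm.decomposeFin.symm (p, e) ∈ molsE (m+2) ↔
      (p = 0 ∧ e ∈ molsD (m+1)) ∨ (p = 1 ∧ e ∈ molsE (m+1)) := by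
  constructor
  · intro h
    have h0 := (Finset.mem_filter.1 h).2 0
    rw [Equiv.Perm.decomposeFin_symm_apply_zero] at h0
    rcases mols_cases p h0.2 with rfl | rfl
    · exact Or.inl ⟨rfl, (mols_zero_iff e).1 h⟩
    · exact Or.inr ⟨rfl, (mols_one_iff' e).1 h⟩
  · rintro (⟨rfl, h⟩ | ⟨rfl, h⟩)
    · exact (mols_zero_iff e).2 h
    · exact (mols_one_iff' e).2 h

lemma molsA_iff {m : ℕ} (p : Fin (m+3)) (e : Equiv.Perm (Fin (m+2))) :
    Equiv.Perm.decomposeFin.symm (p, e) ∈ molsA (m+3) ↔ p = 0 ∧ e ∈ molsD (m+2) := by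
  constructor
  · intro h
    obtain ⟨h0, h1, h2⟩ := (Finset.mem_filter.1 h).2
    have hp := h0 0 rfl
    rw [Equiv.Perm.decomposeFin_symm_apply_zero] at hp
    obtain rfl : p = 0 := Fin.ext hp
    refine ⟨rfl, Finset.mem_filter.2 ⟨Finset.mem_univ _, fun i => ?_⟩⟩
    have := h2 i.succ (by simp)
    rw [mols_succ_zero, Fin.val_succ] at this
    omega
  · rintro ⟨rfl, h⟩
    have h := (Finset.mem_filter.1 h).2
    refine Finset.mem_filter.2 ⟨Finset.mem_univ _, ?_, ?_, ?_⟩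
    · intro i hi
      obtain rfl : i = 0 := Fin.ext hi
      simp
    · intro i hi
      obtain rfl : i = Fin.succ 0 := Fin.ext hi
      rw [mols_succ_zero]
      have := h 0
      simp only [Fin.val_zero] at this
      omega
    · intro i
      refine Fin.cases ?_ (fun j => ?_) i
      · simp
      · intro _
        rw [mols_succ_zero, Fin.val_succ]
        have := h j
        omega

lemma mols_card {m : ℕ} (S : Finset (Equiv.Perm (Fin (m+1))))
    (T : Finset (Fin (m+1) × Equiv.Perm (Fin m)))
    (h : ∀ p e, Equiv.Perm.decomposeFin.symm (p, e) ∈ S ↔ (p, e) ∈ T) : S.card = T.card :=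
  (Finset.card_equiv Equiv.Perm.decomposeFin.symm (fun x => (h x.1 x.2).symm)).symm

lemma molsD_card (m : ℕ) : (molsD (m+2)).card = (molsE (m+1)).card := by
  rw [mols_card (molsD (m+2)) ({1} ×ˢ molsE (m+1)) (fun p e => by simp [molsD_iff, and_comm, eq_comm])]
  simp

lemma molsA_card (m : ℕ) : (molsA (m+3)).card = (molsD (m+2)).card := by
  rw [mols_card (molsA (m+3)) ({0} ×ˢ molsD (m+2)) (fun p e => by simp [molsA_iff, and_comm, eq_comm])]
  simp

lemma molsE_card (m : ℕ) :
    (molsE (m+2)).card = (molsD (m+1)).card + (molsE (m+1)).card := by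
  rw [mols_card (molsE (m+2)) (({0} ×ˢ molsD (m+1)) ∪ ({1} ×ˢ molsE (m+1)))
    (fun p e => by simp [molsE_iff, and_comm, eq_comm]), Finset.card_union_of_disjoint]
  · simp
  · rw [Finset.disjoint_left]
    rintro ⟨p, e⟩ h1 h2
    simp only [Finset.mem_product, Finset.mem_singleton] at h1 h2
    exact absurd (h1.1.symm.trans h2.1) (by simp)

lemma mols_fib (m : ℕ) :
    (molsD (m+1)).card = Nat.fib m ∧ (molsE (m+1)).card = Nat.fib (m+1) := by
  induction m with
  | zero => exact ⟨by decide, by decide⟩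
  | succ k ih => exact ⟨by rw [molsD_card, ih.2], by rw [molsE_card, ih.1, ih.2, Nat.fib_add_two]⟩

/-- For every `n ≥ 3`, `a(n) = F(n−2)`, the `(n−2)`nd Fibonacci number
(with `F(1) = F(2) = 1`). -/
theorem molsa_eq_fib : ∀ n : ℕ, 3 ≤ n → molsa n = Nat.fib (n - 2) := by
  intro n hn
  obtain ⟨m, rfl⟩ := Nat.exists_eq_add_of_le' hn
  rw [molsa, molsA_card, (mols_fib (m+1)).1]
  rfl
end

section
/- For every integer n ≥ 5, a(n) = a(n−1) + a(n−2), where a(n) is the number of permutations ρ of {0,1,…,n−1} satisfying ρ(0)=0, ρ(1)=2, ρ(i)≠i and ρ(i)≤i+1 for all 1≤i≤n−1. -/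
/-- Extend a permutation of `Fin n` to `Fin (n+1)` fixing the last point. -/
def extPerm {n : ℕ} (τ : Equiv.Perm (Fin n)) : Equiv.Perm (Fin (n + 1)) where
  toFun := Fin.lastCases (Fin.last n) (fun i => (τ i).castSucc)
  invFun := Fin.lastCases (Fin.last n) (fun i => (τ.symm i).castSucc)
  left_inv i := by induction i using Fin.lastCases <;> simp
  right_inv i := by induction i using Fin.lastCases <;> simp

theorem extPerm_castSucc {n : ℕ} (τ : Equiv.Perm (Fin n)) (i : Fin n) :
    extPerm τ i.castSucc = (τ i).castSucc := by simp [extPerm]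

theorem extPerm_last {n : ℕ} (τ : Equiv.Perm (Fin n)) :
    extPerm τ (Fin.last n) = Fin.last n := by simp [extPerm]

theorem extPerm_injective {n : ℕ} : Function.Injective (extPerm (n := n)) := by
  intro σ τ h
  ext i
  have := congrArg (fun e => ((e i.castSucc : Fin (n + 1)) : ℕ)) h
  simpa [extPerm_castSucc] using this

theorem exists_extPerm {n : ℕ} (σ : Equiv.Perm (Fin (n + 1)))
    (h : σ (Fin.last n) = Fin.last n) : ∃ τ, σ = extPerm τ := by
  have h1 : ∀ i : Fin n, σ i.castSucc ≠ Fin.last n := fun i hi =>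
    (Fin.castSucc_lt_last i).ne (σ.injective (hi.trans h.symm))
  have h' : σ.symm (Fin.last n) = Fin.last n := by
    rw [Equiv.symm_apply_eq, h]
  have h2 : ∀ i : Fin n, σ.symm i.castSucc ≠ Fin.last n := fun i hi =>
    (Fin.castSucc_lt_last i).ne (σ.symm.injective (hi.trans h'.symm))
  refine ⟨⟨fun i => (σ i.castSucc).castPred (h1 i), fun i => (σ.symm i.castSucc).castPred (h2 i),
    fun i => by simp, fun i => by simp⟩, ?_⟩
  ext i
  induction i using Fin.lastCases with
  | last => rw [extPerm_last, h]
  | cast i => rw [extPerm_castSucc]; simp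

/-- Insert a new last point in the cycle of the previous last one. -/
def insPerm {n : ℕ} (τ : Equiv.Perm (Fin (n + 1))) : Equiv.Perm (Fin (n + 2)) :=
  extPerm τ * Equiv.swap (Fin.last n).castSucc (Fin.last (n + 1))

theorem insPerm_injective {n : ℕ} : Function.Injective (insPerm (n := n)) := by
  intro σ τ h
  exact extPerm_injective (mul_right_cancel h)

theorem insPerm_cast {n : ℕ} (τ : Equiv.Perm (Fin (n + 1))) (i : Fin n) :
    insPerm τ i.castSucc.castSucc = (τ i.castSucc).castSucc := by
  rw [insPerm, Equiv.Perm.mul_apply, Equiv.swap_apply_of_ne_of_ne, extPerm_castSucc]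
  · intro h
    exact (Fin.castSucc_lt_last i).ne (Fin.castSucc_injective _ h)
  · exact (Fin.castSucc_lt_last _).ne

theorem insPerm_prev {n : ℕ} (τ : Equiv.Perm (Fin (n + 1))) :
    insPerm τ (Fin.last n).castSucc = Fin.last (n + 1) := by
  rw [insPerm, Equiv.Perm.mul_apply, Equiv.swap_apply_left, extPerm_last]

theorem insPerm_last {n : ℕ} (τ : Equiv.Perm (Fin (n + 1))) :
    insPerm τ (Fin.last (n + 1)) = (τ (Fin.last n)).castSucc := by
  rw [insPerm, Equiv.Perm.mul_apply, Equiv.swap_apply_right, extPerm_castSucc]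

theorem mem_molsA {n : ℕ} (ρ : Equiv.Perm (Fin n)) : ρ ∈ molsA n ↔
    ∀ i : Fin n, ((i : ℕ) = 0 → (ρ i : ℕ) = 0) ∧ ((i : ℕ) = 1 → (ρ i : ℕ) = 2) ∧
    (1 ≤ (i : ℕ) → (ρ i : ℕ) ≠ (i : ℕ) ∧ (ρ i : ℕ) ≤ (i : ℕ) + 1) := by
  simp only [molsA, Finset.mem_filter, Finset.mem_univ, true_and, forall_and]

theorem insPerm_mem {n : ℕ} (hn : 3 ≤ n) (τ : Equiv.Perm (Fin (n + 1))) :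
    insPerm τ ∈ molsA (n + 2) ↔ τ ∈ molsA (n + 1) ∪ (molsA n).image extPerm := by
  rw [Finset.mem_union, Finset.mem_image, mem_molsA, Fin.forall_fin_succ', Fin.forall_fin_succ',
    mem_molsA, Fin.forall_fin_succ']
  simp only [insPerm_cast, insPerm_prev, insPerm_last, Fin.val_castSucc, Fin.val_last]
  have hlt := (τ (Fin.last n)).isLt
  constructor
  · rintro ⟨⟨h1, h2⟩, h3⟩
    by_cases hf : τ (Fin.last n) = Fin.last n
    · right
      obtain ⟨υ, rfl⟩ := exists_extPerm τ hf
      refine ⟨υ, ?_, rfl⟩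
      rw [mem_molsA]
      simpa only [extPerm_castSucc, Fin.val_castSucc] using h1
    · left
      have : (τ (Fin.last n) : ℕ) ≠ n := fun h => hf (Fin.ext h)
      exact ⟨h1, by omega, by omega, by omega⟩
  · rintro (⟨h1, h2⟩ | ⟨υ, hυ, rfl⟩)
    · exact ⟨⟨h1, by omega, by omega, by omega⟩, by omega, by omega, by omega⟩
    · rw [mem_molsA] at hυ
      simp only [extPerm_castSucc, Fin.val_castSucc]
      exact ⟨⟨hυ, by omega, by omega, by omega⟩, by omega, by omega, by omega⟩

theorem exists_insPerm {n : ℕ} (hn : 3 ≤ n) (ρ : Equiv.Perm (Fin (n + 2)))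
    (h : ρ ∈ molsA (n + 2)) : ∃ τ, insPerm τ = ρ := by
  rw [mem_molsA] at h
  have hp : ρ (Fin.last n).castSucc = Fin.last (n + 1) := by
    obtain ⟨i, hi⟩ := ρ.surjective (Fin.last (n + 1))
    have h1 := h i
    rw [hi, Fin.val_last] at h1
    have : i = (Fin.last n).castSucc := by
      apply Fin.ext
      simp only [Fin.val_castSucc, Fin.val_last]
      have := i.isLt
      omega
    rw [← this, hi]
  obtain ⟨τ, hτ⟩ := exists_extPerm
    (ρ * Equiv.swap (Fin.last n).castSucc (Fin.last (n + 1)))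
    (by rw [Equiv.Perm.mul_apply, Equiv.swap_apply_right, hp])
  refine ⟨τ, ?_⟩
  rw [insPerm, ← hτ, mul_assoc, Equiv.swap_mul_self, mul_one]

theorem molsa_step {n : ℕ} (hn : 3 ≤ n) : molsa (n + 2) = molsa (n + 1) + molsa n := by
  have h : molsA (n + 2) = (molsA (n + 1) ∪ (molsA n).image extPerm).image insPerm := by
    ext ρ
    rw [Finset.mem_image]
    constructor
    · intro h
      obtain ⟨τ, rfl⟩ := exists_insPerm hn ρ h
      exact ⟨τ, (insPerm_mem hn τ).1 h, rfl⟩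
    · rintro ⟨τ, h, rfl⟩
      exact (insPerm_mem hn τ).2 h
  have hd : Disjoint (molsA (n + 1)) ((molsA n).image extPerm) := by
    rw [Finset.disjoint_left]
    intro τ h1 h2
    obtain ⟨υ, -, rfl⟩ := Finset.mem_image.1 h2
    rw [mem_molsA] at h1
    have := h1 (Fin.last n)
    rw [extPerm_last, Fin.val_last] at this
    omega
  rw [molsa, h, Finset.card_image_of_injective _ insPerm_injective,
    Finset.card_union_of_disjoint hd, Finset.card_image_of_injective _ extPerm_injective,
    molsa, molsa]

/-- For every `n ≥ 5`, `a(n) = a(n−1) + a(n−2)`. -/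
theorem molsa_recurrence : ∀ n : ℕ, 5 ≤ n → molsa n = molsa (n - 1) + molsa (n - 2) := by
  intro n hn
  obtain ⟨m, rfl⟩ : ∃ m, n = m + 2 := ⟨n - 2, by omega⟩
  exact molsa_step (by omega)
end

section
/- Let n ≥ 5 and let ρ ∈ A(n) satisfy ρ(n−1) = n−2. Then ρ(n−2) = n−1 and the restriction of ρ to {0,1,…,n−3} is a permutation of {0,1,…,n−3} lying in A(n−2). -/
/-- If `n ≥ 5` and `ρ ∈ A(n)` satisfies `ρ(n−1) = n−2`, then `ρ(n−2) = n−1` and the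
restriction of `ρ` to `{0,1,…,n−3}` is a permutation of `{0,1,…,n−3}` lying in `A(n−2)`. -/
theorem molsA_restrict (n : ℕ) (hn : 5 ≤ n) (ρ : Equiv.Perm (Fin n)) (hρ : ρ ∈ molsA n)
    (h : (ρ ⟨n - 1, by omega⟩ : ℕ) = n - 2) :
    (ρ ⟨n - 2, by omega⟩ : ℕ) = n - 1 ∧
    ∃ ρ' ∈ molsA (n - 2),
      ∀ i : Fin (n - 2), (ρ' i : ℕ) = (ρ (Fin.castLE (by omega) i) : ℕ) := by
  have hA := hρ
  simp only [molsA, Finset.mem_filter, Finset.mem_univ, true_and] at hA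
  obtain ⟨h0, h1, h2⟩ := hA
  have key : (ρ ⟨n - 2, by omega⟩ : ℕ) = n - 1 := by
    obtain ⟨j, hj⟩ := ρ.surjective ⟨n - 1, by omega⟩
    have hjv : (ρ j : ℕ) = n - 1 := by rw [hj]
    have hj0 : (j : ℕ) ≠ 0 := fun hz => by
      have := h0 j hz
      omega
    have hj2 := (h2 j (by omega)).2
    have hjl : (j : ℕ) ≠ n - 1 := fun hz => by
      have e : j = ⟨n - 1, by omega⟩ := Fin.ext hz
      rw [e] at hjv
      omega
    have hlt := j.isLt
    have e : j = ⟨n - 2, by omega⟩ := Fin.ext (by simp only; omega)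
    rw [e] at hjv
    exact hjv
  refine ⟨key, ?_⟩
  have hlt : ∀ i : Fin (n - 2), (ρ (Fin.castLE (by omega) i) : ℕ) < n - 2 := by
    intro i
    have hi := i.isLt
    have hb := (ρ (Fin.castLE (by omega) i)).isLt
    have ha : (ρ (Fin.castLE (by omega) i) : ℕ) ≠ n - 1 := fun hz => by
      have e := ρ.injective (Fin.ext (hz.trans key.symm))
      have := congrArg Fin.val e
      simp only [Fin.val_castLE] at this
      omega
    have hc : (ρ (Fin.castLE (by omega) i) : ℕ) ≠ n - 2 := fun hz => by
      have e := ρ.injective (Fin.ext (hz.trans h.symm))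
      have := congrArg Fin.val e
      simp only [Fin.val_castLE] at this
      omega
    omega
  let f : Fin (n - 2) → Fin (n - 2) := fun i => ⟨ρ (Fin.castLE (by omega) i), hlt i⟩
  have hf : Function.Injective f := by
    intro a b hab
    have hv : (ρ (Fin.castLE (by omega) a) : ℕ) = (ρ (Fin.castLE (by omega) b) : ℕ) :=
      Fin.mk.inj hab
    have e := ρ.injective (Fin.ext hv)
    exact Fin.castLE_injective _ e
  refine ⟨Equiv.ofBijective f (Finite.injective_iff_bijective.mp hf), ?_, fun i => rfl⟩
  simp only [molsA, Finset.mem_filter, Finset.mem_univ, true_and]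
  exact ⟨fun i hi => h0 (Fin.castLE (by omega) i) hi,
    fun i hi => h1 (Fin.castLE (by omega) i) hi,
    fun i hi => h2 (Fin.castLE (by omega) i) hi⟩
end

section
/- Let n ≥ 5 and let ρ ∈ A(n) satisfy ρ(n−1) ≠ n−2. Then ρ(n−3) = n−2, and the permutation ρ' of {0,1,…,n−2} obtained from ρ by deleting the symbol n−1 from its one-line (list) representation lies in A(n−1). -/
/-- If `n ≥ 5` and `ρ ∈ A(n)` satisfies `ρ(n−1) ≠ n−2`, then `ρ(n−3) = n−2`, and the
permutation `ρ'` of `{0,1,…,n−2}` obtained from `ρ` by deleting the symbol `n−1` from its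
one-line (list) representation lies in `A(n−1)`. -/
theorem molsA_delete (n : ℕ) (hn : 5 ≤ n) (ρ : Equiv.Perm (Fin n)) (hρ : ρ ∈ molsA n)
    (h : (ρ ⟨n - 1, by omega⟩ : ℕ) ≠ n - 2) :
    (ρ ⟨n - 3, by omega⟩ : ℕ) = n - 2 ∧
    ∃ ρ' ∈ molsA (n - 1),
      (List.ofFn fun i : Fin n => (ρ i : ℕ)).erase (n - 1)
        = List.ofFn fun i : Fin (n - 1) => (ρ' i : ℕ) := by
  obtain ⟨k, rfl⟩ : ∃ k, n = k + 2 := ⟨n - 2, by omega⟩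
  simp only [molsA, Finset.mem_filter, Finset.mem_univ, true_and] at hρ
  obtain ⟨h0, h1, h2⟩ := hρ
  have inj : ∀ i j : Fin (k + 2), (ρ i : ℕ) = (ρ j : ℕ) → (i : ℕ) = (j : ℕ) := by
    intro i j hij
    exact congrArg Fin.val (ρ.injective (Fin.ext hij))
  have hlast : (ρ (Fin.last k).castSucc : ℕ) = k + 1 := by
    obtain ⟨i, hi⟩ := ρ.surjective (Fin.last (k + 1))
    have hi' : (ρ i : ℕ) = k + 1 := by rw [hi]; rfl
    have e0 := h0 i
    have e2 := h2 i
    have e3 := i.isLt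
    have : i = (Fin.last k).castSucc := by
      apply Fin.ext
      simp only [Fin.val_castSucc, Fin.val_last]
      omega
    rw [← this]; exact hi'
  have hl : (ρ (Fin.last (k + 1)) : ℕ) ≠ k := h
  have hk : (ρ ⟨k - 1, by omega⟩ : ℕ) = k := by
    obtain ⟨i, hi⟩ := ρ.surjective ⟨k, by omega⟩
    have hi' : (ρ i : ℕ) = k := by rw [hi]
    have e0 := h0 i
    have e2 := h2 i
    have e3 := i.isLt
    have e4 : (i : ℕ) ≠ k + 1 := by
      intro e
      have : i = Fin.last (k + 1) := Fin.ext e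
      rw [this] at hi'
      exact hl hi'
    have : i = ⟨k - 1, by omega⟩ := by
      apply Fin.ext
      show (i : ℕ) = k - 1
      omega
    rw [← this]; exact hi'
  have hne : ∀ i : Fin (k + 2), (i : ℕ) ≠ k → (ρ i : ℕ) < k + 1 := by
    intro i hi
    have a := (ρ i).isLt
    have b := inj i (Fin.last k).castSucc
    rw [hlast] at b
    simp only [Fin.val_castSucc, Fin.val_last] at b
    omega
  -- the position map skipping `k`
  let g : Fin (k + 1) → Fin (k + 2) := fun j =>
    if (j : ℕ) < k then j.castSucc else Fin.last (k + 1)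
  have hg1 : ∀ j : Fin (k + 1), (j : ℕ) < k → (g j) = j.castSucc := by
    intro j hj; simp [g, hj]
  have hg2 : ∀ j : Fin (k + 1), ¬ (j : ℕ) < k → (g j) = Fin.last (k + 1) := by
    intro j hj; simp only [g, hj, if_false]
  have hgv : ∀ j : Fin (k + 1), ((j : ℕ) < k ∧ (g j : ℕ) = j) ∨ ((j : ℕ) = k ∧ (g j : ℕ) = k + 1) := by
    intro j
    have := j.isLt
    by_cases hj : (j : ℕ) < k
    · left; rw [hg1 j hj]; exact ⟨hj, rfl⟩
    · right; rw [hg2 j hj]; exact ⟨by omega, rfl⟩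
  let f : Fin (k + 1) → Fin (k + 1) := fun j =>
    ⟨ρ (g j), hne _ (by have := hgv j; omega)⟩
  have hf : Function.Injective f := by
    intro a b hab
    have e := inj (g a) (g b) (Fin.mk.inj_iff.mp hab)
    apply Fin.ext
    have := hgv a
    have := hgv b
    omega
  refine ⟨hk, Equiv.ofBijective f (Finite.injective_iff_bijective.mp hf), ?_, ?_⟩
  · simp only [molsA, Finset.mem_filter, Finset.mem_univ, true_and]
    have hfv : ∀ j, ((Equiv.ofBijective f (Finite.injective_iff_bijective.mp hf)) j : ℕ)
        = (ρ (g j) : ℕ) := fun j => rfl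
    refine ⟨fun i hi => ?_, fun i hi => ?_, fun i hi => ?_⟩
    · refine (hfv i).trans (h0 _ ?_)
      have := hgv i
      omega
    · refine (hfv i).trans (h1 _ ?_)
      have := hgv i
      omega
    · have e : _ = (ρ (g i) : ℕ) := hfv i
      have a := hgv i
      have b := h2 (g i)
      have c := hne (g i) (by omega)
      have d : (i : ℕ) = k → (ρ (g i) : ℕ) ≠ k := by
        intro hi'
        rw [hg2 i (by omega)]
        exact hl
      refine ⟨fun q => ?_, ?_⟩
      · have q' : (ρ (g i) : ℕ) = i := q
        omega
      · show (ρ (g i) : ℕ) ≤ i + 1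
        omega
  · show (List.ofFn fun i : Fin (k + 2) => (ρ i : ℕ)).erase (k + 1)
        = List.ofFn fun i : Fin (k + 1) => (ρ (g i) : ℕ)
    rw [List.ofFn_succ', List.ofFn_succ', List.ofFn_succ']
    simp only [List.concat_eq_append]
    rw [hlast, hg2 (Fin.last k) (by simp), List.append_assoc, List.erase_append_right]
    · have : (fun i : Fin k => (ρ (g i.castSucc) : ℕ))
          = fun i : Fin k => (ρ i.castSucc.castSucc : ℕ) := by
        funext i
        rw [hg1 i.castSucc i.isLt]
      rw [this]
      simp
    · intro hmem
      rw [List.mem_ofFn] at hmem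
      obtain ⟨i, hi⟩ := hmem
      have := hne i.castSucc.castSucc (by have := i.isLt; simp only [Fin.val_castSucc]; omega)
      omega
end

section
/- For n ≥ 5, the map sending ρ' ∈ A(n−1) to the permutation ρ of {0,1,…,n−1} defined by ρ(i)=ρ'(i) for 0≤i≤n−3, ρ(n−2)=n−1, and ρ(n−1)=ρ'(n−2) is a well-defined injection from A(n−1) into A(n), and every permutation ρ in its image satisfies ρ(n−3)=n−2. -/
/-- The underlying function of the inserted permutation. -/
def molsInsFun (n : ℕ) (hn : 5 ≤ n) (r : Equiv.Perm (Fin (n - 1))) (i : Fin n) : Fin n :=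
  if h : (i : ℕ) ≤ n - 3 then ⟨r ⟨i, by omega⟩, by omega⟩
  else if (i : ℕ) = n - 2 then ⟨n - 1, by omega⟩
  else ⟨r ⟨n - 2, by omega⟩, by omega⟩

theorem molsInsFun_inj (n : ℕ) (hn : 5 ≤ n) (r : Equiv.Perm (Fin (n - 1))) :
    Function.Injective (molsInsFun n hn r) := by
  have key : ∀ (a b : ℕ) (ha : a < n - 1) (hb : b < n - 1),
      (r ⟨a, ha⟩ : ℕ) = (r ⟨b, hb⟩ : ℕ) → a = b := by
    intro a b ha hb h
    simpa using r.injective (Fin.ext h)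
  have lt : ∀ a, (r a : ℕ) < n - 1 := fun a => (r a).2
  intro i j h
  have h' := congrArg Fin.val h
  apply Fin.ext
  unfold molsInsFun at h'
  split_ifs at h' <;> simp only at h' <;>
    first
    | omega
    | exact key _ _ _ _ h'
    | (have := key _ _ _ _ h'; omega)
    | (have := lt ⟨i, by omega⟩; omega)
    | (have := lt ⟨j, by omega⟩; omega)
    | (have := lt ⟨n - 2, by omega⟩; omega)

theorem molsA_top (n : ℕ) (hn : 5 ≤ n) (r : Equiv.Perm (Fin (n - 1))) (hr : r ∈ molsA (n - 1)) :
    (r ⟨n - 3, by omega⟩ : ℕ) = n - 2 := by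
  simp only [molsA, Finset.mem_filter, Finset.mem_univ, true_and] at hr
  obtain ⟨h0, h1, h2⟩ := hr
  obtain ⟨i, hi⟩ := r.surjective ⟨n - 2, by omega⟩
  have hi' : (r i : ℕ) = n - 2 := by rw [hi]
  have hpos : 1 ≤ (i : ℕ) := by
    by_contra hc
    have := h0 i (by omega)
    omega
  have := h2 i hpos
  have e : i = ⟨n - 3, by omega⟩ := Fin.ext (by simp only; omega)
  rw [← e]; exact hi'

/-- For `n ≥ 5`, the map sending `ρ' ∈ A(n−1)` to the permutation `ρ` of `{0,1,…,n−1}`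
defined by `ρ(i) = ρ'(i)` for `0 ≤ i ≤ n−3`, `ρ(n−2) = n−1` and `ρ(n−1) = ρ'(n−2)` is a
well-defined injection from `A(n−1)` into `A(n)`, and every permutation `ρ` in its image
satisfies `ρ(n−3) = n−2`. -/
theorem molsA_insert (n : ℕ) (hn : 5 ≤ n) :
    ∃ f : Equiv.Perm (Fin (n - 1)) → Equiv.Perm (Fin n),
      (∀ ρ' ∈ molsA (n - 1), f ρ' ∈ molsA n) ∧
      Set.InjOn f (molsA (n - 1)) ∧
      (∀ ρ' ∈ molsA (n - 1),
        (∀ i : Fin (n - 1), (i : ℕ) ≤ n - 3 →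
          ((f ρ') (Fin.castLE (by omega) i) : ℕ) = (ρ' i : ℕ)) ∧
        ((f ρ') ⟨n - 2, by omega⟩ : ℕ) = n - 1 ∧
        ((f ρ') ⟨n - 1, by omega⟩ : ℕ) = (ρ' ⟨n - 2, by omega⟩ : ℕ)) ∧
      (∀ ρ' ∈ molsA (n - 1), ((f ρ') ⟨n - 3, by omega⟩ : ℕ) = n - 2) := by
  have fv : ∀ (r : Equiv.Perm (Fin (n - 1))) (i : Fin n),
      Equiv.ofBijective _ (Finite.injective_iff_bijective.mp (molsInsFun_inj n hn r)) i
        = molsInsFun n hn r i := fun _ _ => rfl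
  have low : ∀ (r : Equiv.Perm (Fin (n - 1))) (i : Fin n) (h : (i : ℕ) ≤ n - 3),
      (molsInsFun n hn r i : ℕ) = r ⟨i, by omega⟩ := by
    intro r i h
    simp [molsInsFun, h]
  have mid : ∀ (r : Equiv.Perm (Fin (n - 1))) (i : Fin n) (h : (i : ℕ) = n - 2),
      (molsInsFun n hn r i : ℕ) = n - 1 := by
    intro r i h
    have : ¬ (i : ℕ) ≤ n - 3 := by omega
    unfold molsInsFun
    rw [dif_neg this, if_pos h]
  have top : ∀ (r : Equiv.Perm (Fin (n - 1))) (i : Fin n) (h : (i : ℕ) = n - 1),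
      (molsInsFun n hn r i : ℕ) = r ⟨n - 2, by omega⟩ := by
    intro r i h
    have h1 : ¬ (i : ℕ) ≤ n - 3 := by omega
    have h2 : ¬ (i : ℕ) = n - 2 := by omega
    unfold molsInsFun
    rw [dif_neg h1, if_neg h2]
  refine ⟨fun r => Equiv.ofBijective _
    (Finite.injective_iff_bijective.mp (molsInsFun_inj n hn r)), ?_, ?_, ?_, ?_⟩
  · intro r hr
    simp only [molsA, Finset.mem_filter, Finset.mem_univ, true_and] at hr ⊢
    obtain ⟨h0, h1, h2⟩ := hr
    refine ⟨fun i hi => ?_, fun i hi => ?_, fun i hi => ?_⟩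
    · rw [fv, low r i (by omega)]; exact h0 _ hi
    · rw [fv, low r i (by omega)]; exact h1 _ hi
    · rw [fv]
      have hlt := i.2
      rcases (by omega : (i : ℕ) ≤ n - 3 ∨ (i : ℕ) = n - 2 ∨ (i : ℕ) = n - 1) with h | h | h
      · rw [low r i h]; exact h2 _ hi
      · rw [mid r i h]; omega
      · rw [top r i h]
        have := (r ⟨n - 2, by omega⟩).2
        omega
  · intro r _ s _ hrs
    have hv : ∀ i, molsInsFun n hn r i = molsInsFun n hn s i := fun i => by
      rw [← fv, ← fv]; exact congrArg (fun e : Equiv.Perm (Fin n) => e i) hrs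
    ext i
    have hlt := i.2
    by_cases h : (i : ℕ) ≤ n - 3
    · have := congrArg Fin.val (hv ⟨i, by omega⟩)
      rwa [low r _ h, low s _ h] at this
    · have e : i = ⟨n - 2, by omega⟩ := Fin.ext (by simp only; omega)
      have := congrArg Fin.val (hv ⟨n - 1, by omega⟩)
      rw [top r _ rfl, top s _ rfl] at this
      rw [e]; exact this
  · intro r hr
    refine ⟨fun i hi => ?_, ?_, ?_⟩
    · exact low r _ hi
    · exact mid r _ rfl
    · exact top r _ rfl
  · intro r hr
    exact (low r ⟨n - 3, by omega⟩ le_rfl).trans (molsA_top n hn r hr)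
end

section
/- For n ≥ 5, the map sending ρ' ∈ A(n−2) to the permutation ρ of {0,1,…,n−1} defined by ρ(i)=ρ'(i) for 0≤i≤n−3, ρ(n−2)=n−1, and ρ(n−1)=n−2 is a well-defined injection from A(n−2) into A(n), and every permutation ρ in its image satisfies ρ(n−1)=n−2. Moreover its image is disjoint from the image of the injection A(n−1) → A(n) that inserts the symbol n−1 in the second-last position. -/
/-- For `n ≥ 5`, the map sending `ρ' ∈ A(n−2)` to the permutation `ρ` of `{0,1,…,n−1}`
defined by `ρ(i) = ρ'(i)` for `0 ≤ i ≤ n−3`, `ρ(n−2) = n−1` and `ρ(n−1) = n−2` is a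
well-defined injection from `A(n−2)` into `A(n)`, every permutation `ρ` in its image
satisfies `ρ(n−1) = n−2`, and its image is disjoint from the image of the injection
`A(n−1) → A(n)` that inserts the symbol `n−1` in the second-last position
(i.e. `ρ'` maps to `ρ` with `ρ(i) = ρ'(i)` for `0 ≤ i ≤ n−3`, `ρ(n−2) = n−1`,
`ρ(n−1) = ρ'(n−2)`). -/
theorem molsA_append (n : ℕ) (hn : 5 ≤ n) :
    ∃ g : Equiv.Perm (Fin (n - 2)) → Equiv.Perm (Fin n),
    ∃ f : Equiv.Perm (Fin (n - 1)) → Equiv.Perm (Fin n),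
      (∀ ρ' ∈ molsA (n - 2), g ρ' ∈ molsA n) ∧
      Set.InjOn g (molsA (n - 2)) ∧
      (∀ ρ' ∈ molsA (n - 2),
        (∀ i : Fin (n - 2), ((g ρ') (Fin.castLE (by omega) i) : ℕ) = (ρ' i : ℕ)) ∧
        ((g ρ') ⟨n - 2, by omega⟩ : ℕ) = n - 1 ∧
        ((g ρ') ⟨n - 1, by omega⟩ : ℕ) = n - 2) ∧
      (∀ ρ' ∈ molsA (n - 1),
        (∀ i : Fin (n - 1), (i : ℕ) ≤ n - 3 →
          ((f ρ') (Fin.castLE (by omega) i) : ℕ) = (ρ' i : ℕ)) ∧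
        ((f ρ') ⟨n - 2, by omega⟩ : ℕ) = n - 1 ∧
        ((f ρ') ⟨n - 1, by omega⟩ : ℕ) = (ρ' ⟨n - 2, by omega⟩ : ℕ)) ∧
      (∀ ρ' ∈ molsA (n - 1), f ρ' ∈ molsA n) ∧
      (∀ ρ' ∈ molsA (n - 2), ∀ σ' ∈ molsA (n - 1), g ρ' ≠ f σ') := by
  have molsA_exists_g (ρ' : Equiv.Perm (Fin (n - 2))) :
      ∃ ρ : Equiv.Perm (Fin n),
        (∀ i : Fin n, ∀ h : (i : ℕ) < n - 2, (ρ i : ℕ) = (ρ' ⟨i, h⟩ : ℕ)) ∧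
        (∀ i : Fin n, (i : ℕ) = n - 2 → (ρ i : ℕ) = n - 1) ∧
        (∀ i : Fin n, (i : ℕ) = n - 1 → (ρ i : ℕ) = n - 2) := by
    let F : Fin n → Fin n := fun i =>
      if h : (i : ℕ) < n - 2 then ⟨ρ' ⟨i, h⟩, by have := (ρ' ⟨i, h⟩).2; omega⟩
      else if (i : ℕ) = n - 2 then ⟨n - 1, by omega⟩ else ⟨n - 2, by omega⟩
    have h1 : ∀ i : Fin n, ∀ h : (i : ℕ) < n - 2, (F i : ℕ) = (ρ' ⟨i, h⟩ : ℕ) := by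
      intro i h; simp [F, h]
    have h2 : ∀ i : Fin n, (i : ℕ) = n - 2 → (F i : ℕ) = n - 1 := by
      intro i h; simp [F, h]
    have h3 : ∀ i : Fin n, (i : ℕ) = n - 1 → (F i : ℕ) = n - 2 := by
      intro i h
      have a : ¬ (i : ℕ) < n - 2 := by omega
      have b : ¬ (i : ℕ) = n - 2 := by omega
      simp only [F, dif_neg a, if_neg b]
    have hinj : Function.Injective F := by
      intro i j hij
      have hv : (F i : ℕ) = (F j : ℕ) := by rw [hij]
      have key : ∀ k : Fin n, (∃ h : (k : ℕ) < n - 2, (F k : ℕ) = (ρ' ⟨k, h⟩ : ℕ) ∧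
          (F k : ℕ) < n - 2) ∨
          ((k : ℕ) = n - 2 ∧ (F k : ℕ) = n - 1) ∨ ((k : ℕ) = n - 1 ∧ (F k : ℕ) = n - 2) := by
        intro k
        by_cases a : (k : ℕ) < n - 2
        · exact Or.inl ⟨a, h1 k a, by rw [h1 k a]; exact (ρ' ⟨k, a⟩).2⟩
        · by_cases b : (k : ℕ) = n - 2
          · exact Or.inr (Or.inl ⟨b, h2 k b⟩)
          · have c : (k : ℕ) = n - 1 := by have := k.2; omega
            exact Or.inr (Or.inr ⟨c, h3 k c⟩)
      apply Fin.ext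
      rcases key i with ⟨a, b, c⟩ | ⟨a, b⟩ | ⟨a, b⟩ <;>
        rcases key j with ⟨a', b', c'⟩ | ⟨a', b'⟩ | ⟨a', b'⟩ <;> try omega
      have := ρ'.injective (Fin.ext (b.symm.trans (hv.trans b')))
      simpa using this
    exact ⟨Equiv.ofBijective F (Finite.injective_iff_bijective.mp hinj), h1, h2, h3⟩
  have e1 : ∀ k : ℕ, k < n - 2 → k < n - 1 := by intro k hk; omega
  have e2 : n - 2 < n - 1 := by omega
  have molsA_exists_f (ρ' : Equiv.Perm (Fin (n - 1))) :
      ∃ ρ : Equiv.Perm (Fin n),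
        (∀ i : Fin n, ∀ h : (i : ℕ) < n - 2, (ρ i : ℕ) = (ρ' ⟨i, e1 _ h⟩ : ℕ)) ∧
        (∀ i : Fin n, (i : ℕ) = n - 2 → (ρ i : ℕ) = n - 1) ∧
        (∀ i : Fin n, (i : ℕ) = n - 1 → (ρ i : ℕ) = (ρ' ⟨n - 2, e2⟩ : ℕ)) := by
    let F : Fin n → Fin n := fun i =>
      if h : (i : ℕ) < n - 2 then
        ⟨ρ' ⟨i, e1 _ h⟩, by have := (ρ' ⟨i, e1 _ h⟩).2; omega⟩
      else if (i : ℕ) = n - 2 then ⟨n - 1, by omega⟩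
      else ⟨ρ' ⟨n - 2, e2⟩, by have := (ρ' ⟨n - 2, e2⟩).2; omega⟩
    have h1 : ∀ i : Fin n, ∀ h : (i : ℕ) < n - 2,
        (F i : ℕ) = (ρ' ⟨i, e1 _ h⟩ : ℕ) := by
      intro i h; simp [F, h]
    have h2 : ∀ i : Fin n, (i : ℕ) = n - 2 → (F i : ℕ) = n - 1 := by
      intro i h; simp [F, h]
    have h3 : ∀ i : Fin n, (i : ℕ) = n - 1 → (F i : ℕ) = (ρ' ⟨n - 2, e2⟩ : ℕ) := by
      intro i h
      have a : ¬ (i : ℕ) < n - 2 := by omega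
      have b : ¬ (i : ℕ) = n - 2 := by omega
      simp only [F, dif_neg a, if_neg b]
    have hinj : Function.Injective F := by
      intro i j hij
      have hv : (F i : ℕ) = (F j : ℕ) := by rw [hij]
      have key : ∀ k : Fin n, ((k : ℕ) = n - 2 ∧ (F k : ℕ) = n - 1) ∨
          ∃ m : Fin (n - 1), (F k : ℕ) = (ρ' m : ℕ) ∧ (F k : ℕ) < n - 1 ∧
            (((k : ℕ) < n - 2 ∧ (m : ℕ) = k) ∨ ((k : ℕ) = n - 1 ∧ (m : ℕ) = n - 2)) := by
        intro k
        by_cases a : (k : ℕ) < n - 2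
        · exact Or.inr ⟨⟨k, by omega⟩, h1 k a, by rw [h1 k a]; exact (ρ' _).2, Or.inl ⟨a, rfl⟩⟩
        · by_cases b : (k : ℕ) = n - 2
          · exact Or.inl ⟨b, h2 k b⟩
          · have c : (k : ℕ) = n - 1 := by have := k.2; omega
            exact Or.inr ⟨⟨n - 2, e2⟩, h3 k c, by rw [h3 k c]; exact (ρ' _).2,
              Or.inr ⟨c, rfl⟩⟩
      apply Fin.ext
      rcases key i with ⟨a, b⟩ | ⟨m, b, c, d⟩ <;>
        rcases key j with ⟨a', b'⟩ | ⟨m', b', c', d'⟩ <;> try omega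
      have := ρ'.injective (Fin.ext (b.symm.trans (hv.trans b')))
      subst this
      omega
    exact ⟨Equiv.ofBijective F (Finite.injective_iff_bijective.mp hinj), h1, h2, h3⟩
  choose g g1 g2 g3 using molsA_exists_g
  choose f f1 f2 f3 using molsA_exists_f
  refine ⟨g, f, ?_, ?_, ?_, ?_, ?_, ?_⟩
  · intro ρ' h
    simp only [molsA, Finset.mem_filter, Finset.mem_univ, true_and] at h ⊢
    obtain ⟨a, b, c⟩ := h
    refine ⟨fun i hi => ?_, fun i hi => ?_, fun i hi => ?_⟩
    · rw [g1 ρ' i (by omega)]; exact a _ hi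
    · rw [g1 ρ' i (by omega)]; exact b _ hi
    · by_cases h1 : (i : ℕ) < n - 2
      · rw [g1 ρ' i h1]; exact c ⟨i, h1⟩ hi
      · by_cases h2 : (i : ℕ) = n - 2
        · rw [g2 ρ' i h2]; omega
        · rw [g3 ρ' i (by omega)]; omega
  · intro ρ _ σ _ h
    ext i
    have h1 := g1 ρ (Fin.castLE (by omega) i) i.2
    have h2 := g1 σ (Fin.castLE (by omega) i) i.2
    rw [h] at h1
    exact h1.symm.trans h2
  · intro ρ' _
    exact ⟨fun i => g1 ρ' _ i.2, g2 ρ' _ rfl, g3 ρ' _ rfl⟩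
  · intro ρ' _
    exact ⟨fun i hi => f1 ρ' (Fin.castLE (by omega) i) (by simp only [Fin.val_castLE]; omega),
      f2 ρ' _ rfl, f3 ρ' _ rfl⟩
  · intro ρ' h
    simp only [molsA, Finset.mem_filter, Finset.mem_univ, true_and] at h ⊢
    obtain ⟨a, b, c⟩ := h
    refine ⟨fun i hi => ?_, fun i hi => ?_, fun i hi => ?_⟩
    · rw [f1 ρ' i (by omega)]; exact a _ hi
    · rw [f1 ρ' i (by omega)]; exact b _ hi
    · by_cases h1 : (i : ℕ) < n - 2
      · rw [f1 ρ' i h1]; exact c ⟨i, e1 _ h1⟩ hi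
      · by_cases h2 : (i : ℕ) = n - 2
        · rw [f2 ρ' i h2]; omega
        · rw [f3 ρ' i (by omega)]
          have := (ρ' ⟨n - 2, by omega⟩).2
          omega
  · intro ρ' _ σ' hσ h
    simp only [molsA, Finset.mem_filter, Finset.mem_univ, true_and] at hσ
    have h1 := g3 ρ' ⟨n - 1, by omega⟩ rfl
    have h2 := f3 σ' ⟨n - 1, by omega⟩ rfl
    rw [h] at h1
    exact (hσ.2.2 ⟨n - 2, by omega⟩ (by simp only; omega)).1 (h2.symm.trans h1)
end
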